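/- Let α > 0 and define G : (0,∞) → ℝ by G(t) = t^α/2 for 0 < t ≤ 1 and G(t) = 1 − 1/(2 t^α) for t > 1 (G is the Kendall transform of the measure ν with cumulative distribution function F(t) = min(t^α, 1), the distribution with the lack of memory property for the Kendall convolution). For n ≥ 1 let μ_n be a probability measure on [0,∞) such that ∫_{[0,∞)} (1 − x^α/t^α)_+ μ_n(dx) = G(t)^n for all t > 0. Then μ_n([0,t]) = (n+1) (t^α/2)^n for 0 < t ≤ 1, and μ_n([0,t]) = (1 + (n−1)/(2 t^α)) (1 − 1/(2 t^α))^{n−1} for t > 1. -/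

import Mathlib

open MeasureTheory

/-!
Let `Φ u = ∫ (u - y)₊ dν` for the image `ν` of `μ` under `x ↦ x ^ α`. The function `Φ` is convex
with subgradient `ν (-∞, u]` at `u`, and this subgradient is right-continuous in `u`, hence it is
the right derivative of `Φ`. As `Φ (t ^ α) = t ^ α * H t`, where `H` is the Kendall transform of
`μ`, the right derivative `H'` of `H` satisfies `μ [0, t] = H t + (t / α) * H'`. For `H = G ^ n`
this reads `μ [0, t] = G t ^ n + n * G t ^ (n - 1) * (t / α) * G'`, and here `(t / α) * G'` is
`t ^ α / 2` for `t ≤ 1` and `1 / (2 * t ^ α)` for `t ≥ 1`.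
-/

open ProbabilityTheory Set Filter Topology

section IntegratedCDF

/-- The integrated distribution function `u ↦ 𝔼 (u - Y)₊` of a real random variable `Y` with law
`ν`. It is meaningful when the negative part of `Y` is integrable; otherwise the integral is the
junk value `0`. -/
noncomputable def integratedCDF (ν : Measure ℝ) (u : ℝ) : ℝ :=
  ∫ y, max (u - y) 0 ∂ν

lemma integrable_max_sub_zero {ν : Measure ℝ} [IsFiniteMeasure ν]
    (hν : Integrable (fun y => max (-y) 0) ν) (u : ℝ) :
    Integrable (fun y => max (u - y) 0) ν := by
  refine (hν.add (integrable_const |u|)).mono' (by fun_prop) (ae_of_all _ fun y => ?_)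
  rw [Real.norm_of_nonneg (le_max_right _ _)]
  calc max (u - y) 0 ≤ max (-y + |u|) (0 + |u|) :=
        max_le_max (by linarith [le_abs_self u]) (by positivity)
    _ = max (-y) 0 + |u| := max_add_add_right _ _ _

lemma sub_mul_measureReal_Iic_le {ν : Measure ℝ} [IsFiniteMeasure ν]
    (hν : Integrable (fun y => max (-y) 0) ν) (s u : ℝ) :
    (u - s) * ν.real (Iic s) ≤ integratedCDF ν u - integratedCDF ν s := by
  have hu := integrable_max_sub_zero hν u
  have hs := integrable_max_sub_zero hν s
  calc (u - s) * ν.real (Iic s) = ∫ y, (Iic s).indicator (fun _ => u - s) y ∂ν := by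
        rw [integral_indicator_const _ measurableSet_Iic, smul_eq_mul, mul_comm]
    _ ≤ ∫ y, (max (u - y) 0 - max (s - y) 0) ∂ν := by
        refine integral_mono ((integrable_const _).indicator measurableSet_Iic) (hu.sub hs)
          fun y => ?_
        by_cases hy : y ≤ s
        · rw [indicator_of_mem (mem_Iic.2 hy), max_eq_left (sub_nonneg.2 hy)]
          linarith [le_max_left (u - y) 0]
        · rw [indicator_of_notMem (by simpa using hy), max_eq_right (by linarith : s - y ≤ 0),
            sub_zero]
          exact le_max_right _ _
    _ = integratedCDF ν u - integratedCDF ν s := integral_sub hu hs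

theorem hasDerivWithinAt_integratedCDF {ν : Measure ℝ} [IsProbabilityMeasure ν]
    (hν : Integrable (fun y => max (-y) 0) ν) (s : ℝ) :
    HasDerivWithinAt (integratedCDF ν) (cdf ν s) (Ici s) s := by
  have subgradient (a b : ℝ) : (b - a) * cdf ν a ≤ integratedCDF ν b - integratedCDF ν a := by
    simpa only [cdf_eq_real] using sub_mul_measureReal_Iic_le hν a b
  rw [← hasDerivWithinAt_Ioi_iff_Ici, hasDerivWithinAt_iff_tendsto_slope' self_notMem_Ioi]
  have cdf_tendsto : Tendsto (cdf ν) (𝓝[>] s) (𝓝 (cdf ν s)) :=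
    ((cdf ν).right_continuous s).mono_left (nhdsWithin_mono s Ioi_subset_Ici_self)
  refine tendsto_of_tendsto_of_tendsto_of_le_of_le' tendsto_const_nhds cdf_tendsto ?_ ?_ <;>
    filter_upwards [self_mem_nhdsWithin] with u (hu : s < u) <;>
    rw [slope_def_field]
  · rw [le_div_iff₀ (sub_pos.2 hu)]
    linarith [subgradient s u]
  · rw [div_le_iff₀ (sub_pos.2 hu)]
    linarith [subgradient u s]

end IntegratedCDF

section KendallTransform

/-- The Kendall transform of order `α` of a measure `μ` on `[0, ∞)`, encoded as a measure on `ℝ`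
that gives no mass to the negative half-line. Only its values at `t > 0` are meaningful. -/
noncomputable def kendallTransform (α : ℝ) (μ : Measure ℝ) (t : ℝ) : ℝ :=
  ∫ x, max (1 - x ^ α / t ^ α) 0 ∂μ

lemma kendallTransform_eq_integratedCDF_div (α : ℝ) (μ : Measure ℝ) {t : ℝ} (ht : 0 < t) :
    kendallTransform α μ t = integratedCDF (μ.map (· ^ α)) (t ^ α) / t ^ α := by
  have hs : 0 < t ^ α := Real.rpow_pos_of_pos ht α
  rw [integratedCDF, integral_map (by fun_prop) (by fun_prop), ← integral_div]
  refine integral_congr_ae (ae_of_all _ fun x => ?_)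
  dsimp only
  rw [← max_div_div_right hs.le, sub_div, div_self hs.ne', zero_div]

variable {α : ℝ} {μ : Measure ℝ} [IsProbabilityMeasure μ]

lemma cdf_map_rpow (hα : 0 < α) (hμ : ∀ᵐ x ∂μ, 0 ≤ x) {t : ℝ} (ht : 0 ≤ t) :
    cdf (μ.map (· ^ α)) (t ^ α) = μ.real (Icc 0 t) := by
  have hmeas : Measurable fun x : ℝ => x ^ α := by fun_prop
  have := Measure.isProbabilityMeasure_map (μ := μ) hmeas.aemeasurable
  rw [cdf_eq_real, map_measureReal_apply hmeas measurableSet_Iic]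
  refine measureReal_congr ?_
  filter_upwards [hμ] with x hx
  exact propext ⟨fun h => ⟨hx, (Real.rpow_le_rpow_iff hx ht hα).1 h⟩,
    fun h => Real.rpow_le_rpow hx h.2 hα.le⟩

lemma hasDerivWithinAt_integratedCDF_map_rpow (hα : 0 < α) (hμ : ∀ᵐ x ∂μ, 0 ≤ x) {t : ℝ}
    (ht : 0 < t) :
    HasDerivWithinAt (fun u => integratedCDF (μ.map (· ^ α)) (u ^ α))
      (μ.real (Icc 0 t) * (α * t ^ (α - 1))) (Ici t) t := by
  have hmeas : AEMeasurable (fun x : ℝ => x ^ α) μ := by fun_prop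
  have := Measure.isProbabilityMeasure_map hmeas
  have hneg : Integrable (fun y => max (-y) 0) (μ.map (· ^ α)) := by
    rw [integrable_map_measure (by fun_prop) hmeas]
    refine (integrable_zero ℝ ℝ μ).congr ?_
    filter_upwards [hμ] with x hx
    exact (max_eq_right (neg_nonpos.2 (Real.rpow_nonneg hx α))).symm
  rw [← cdf_map_rpow hα hμ ht.le]
  exact (hasDerivWithinAt_integratedCDF hneg (t ^ α)).comp t
    (Real.hasDerivAt_rpow_const (Or.inl ht.ne')).hasDerivWithinAt
    fun u hu => Real.rpow_le_rpow ht.le hu hα.le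

theorem hasDerivWithinAt_kendallTransform (hα : 0 < α) (hμ : ∀ᵐ x ∂μ, 0 ≤ x) {t : ℝ}
    (ht : 0 < t) :
    HasDerivWithinAt (kendallTransform α μ)
      (α / t * (μ.real (Icc 0 t) - kendallTransform α μ t)) (Ici t) t := by
  have hs : t ^ α ≠ 0 := (Real.rpow_pos_of_pos ht α).ne'
  have hquot := (hasDerivWithinAt_integratedCDF_map_rpow hα hμ ht).div
    (Real.hasDerivAt_rpow_const (p := α) (Or.inl ht.ne')).hasDerivWithinAt hs
  refine (hquot.congr (fun u hu => ?_) ?_).congr_deriv ?_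
  · exact kendallTransform_eq_integratedCDF_div α μ (ht.trans_le hu)
  · exact kendallTransform_eq_integratedCDF_div α μ ht
  · rw [kendallTransform_eq_integratedCDF_div α μ ht, Real.rpow_sub_one ht.ne']
    field_simp

theorem measureReal_Icc_eq_of_kendallTransform_eq_pow (hα : 0 < α) (hμ : ∀ᵐ x ∂μ, 0 ≤ x)
    {G : ℝ → ℝ} {n : ℕ} (hG : ∀ t, 0 < t → kendallTransform α μ t = G t ^ n) {t E : ℝ}
    (ht : 0 < t) (hE : HasDerivWithinAt G (α / t * E) (Ici t) t) :
    μ.real (Icc 0 t) = G t ^ n + n * G t ^ (n - 1) * E := by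
  have hpow : HasDerivWithinAt (kendallTransform α μ) (n * G t ^ (n - 1) * (α / t * E))
      (Ici t) t :=
    (hE.pow n).congr (fun u hu => hG u (ht.trans_le hu)) (hG t ht)
  have hderiv := (uniqueDiffWithinAt_Ici t).eq_deriv _
    (hasDerivWithinAt_kendallTransform hα hμ ht) hpow
  rw [hG t ht, mul_left_comm] at hderiv
  linarith [mul_left_cancel₀ (div_pos hα ht).ne' hderiv]

end KendallTransform

section LackOfMemory

lemma hasDerivAt_one_sub_one_div_two_mul_rpow (α : ℝ) {t : ℝ} (ht : 0 < t) :
    HasDerivAt (fun u => 1 - 1 / (2 * u ^ α)) (α / t * (1 / (2 * t ^ α))) t := by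
  have hs : 2 * t ^ α ≠ 0 := (mul_pos two_pos (Real.rpow_pos_of_pos ht α)).ne'
  have hrpow := (Real.hasDerivAt_rpow_const (p := α) (Or.inl ht.ne')).const_mul 2
  refine (((hasDerivAt_const t (1 : ℝ)).div hrpow hs).const_sub 1).congr_deriv ?_
  rw [Real.rpow_sub_one ht.ne']
  field_simp
  ring

lemma hasDerivAt_rpow_div_two (α : ℝ) {t : ℝ} (ht : 0 < t) :
    HasDerivAt (fun u => u ^ α / 2) (α / t * (t ^ α / 2)) t := by
  refine ((Real.hasDerivAt_rpow_const (Or.inl ht.ne')).div_const 2).congr_deriv ?_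
  rw [Real.rpow_sub_one ht.ne']
  ring

variable {α : ℝ} {G : ℝ → ℝ}

lemma hasDerivWithinAt_lackOfMemory_of_one_le (hG1 : G 1 = 1 / 2)
    (hG2 : ∀ t, 1 < t → G t = 1 - 1 / (2 * t ^ α)) {t : ℝ} (ht : 1 ≤ t) :
    HasDerivWithinAt G (α / t * (1 / (2 * t ^ α))) (Ici t) t := by
  have hG : ∀ u, 1 ≤ u → G u = 1 - 1 / (2 * u ^ α) := by
    intro u hu
    rcases hu.eq_or_lt with rfl | hu
    · rw [hG1, Real.one_rpow]
      norm_num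
    · exact hG2 u hu
  exact (hasDerivAt_one_sub_one_div_two_mul_rpow α (one_pos.trans_le ht)).hasDerivWithinAt.congr
    (fun u hu => hG u (ht.trans hu)) (hG t ht)

lemma hasDerivWithinAt_lackOfMemory_of_le_one (hG1 : ∀ t, 0 < t → t ≤ 1 → G t = t ^ α / 2)
    (hG2 : ∀ t, 1 < t → G t = 1 - 1 / (2 * t ^ α)) {t : ℝ} (ht : 0 < t) (ht1 : t ≤ 1) :
    HasDerivWithinAt G (α / t * (t ^ α / 2)) (Ici t) t := by
  rcases ht1.lt_or_eq with ht1 | rfl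
  · refine ((hasDerivAt_rpow_div_two α ht).congr_of_eventuallyEq ?_).hasDerivWithinAt
    filter_upwards [Ioo_mem_nhds ht ht1] with u hu using hG1 u hu.1 hu.2.le
  · have hG_one : G 1 = 1 / 2 := by rw [hG1 1 one_pos le_rfl, Real.one_rpow]
    simpa using hasDerivWithinAt_lackOfMemory_of_one_le hG_one hG2 le_rfl

end LackOfMemory

/-- For the Kendall random walk with the lack-of-memory step distribution
(cdf `F(t) = min(t^α,1)`, Kendall transform `G(t) = t^α/2` for `t ≤ 1`,
`G(t) = 1 - 1/(2t^α)` for `t > 1`): the n-fold Kendall convolution power `μ_n`,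
characterized by its Kendall transform `G^n`, satisfies
`μ_n([0,t]) = (n+1)(t^α/2)^n` for `0 < t ≤ 1` and
`μ_n([0,t]) = (1 + (n-1)/(2t^α))(1 - 1/(2t^α))^{n-1}` for `t > 1`. -/
theorem kendall_lackOfMemory_walk_cdf (α : ℝ) (hα : 0 < α)
    (G : ℝ → ℝ)
    (hG1 : ∀ t : ℝ, 0 < t → t ≤ 1 → G t = t ^ α / 2)
    (hG2 : ∀ t : ℝ, 1 < t → G t = 1 - 1 / (2 * t ^ α))
    (n : ℕ) (hn : 1 ≤ n)
    (μn : Measure ℝ) [IsProbabilityMeasure μn] (hμn0 : μn (Set.Iio 0) = 0)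
    (htransform : ∀ t : ℝ, 0 < t →
      ∫ x, max (1 - x ^ α / t ^ α) 0 ∂μn = (G t) ^ n) :
    (∀ t : ℝ, 0 < t → t ≤ 1 →
      μn (Set.Icc 0 t) = ENNReal.ofReal (((n : ℝ) + 1) * (t ^ α / 2) ^ n)) ∧
    (∀ t : ℝ, 1 < t →
      μn (Set.Icc 0 t) = ENNReal.ofReal
        ((1 + ((n : ℝ) - 1) / (2 * t ^ α)) * (1 - 1 / (2 * t ^ α)) ^ (n - 1))) := by
  have hμ : ∀ᵐ x ∂μn, 0 ≤ x :=
    (measure_eq_zero_iff_ae_notMem.1 hμn0).mono fun _ hx => not_lt.1 hx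
  have hG_one : G 1 = 1 / 2 := by rw [hG1 1 one_pos le_rfl, Real.one_rpow]
  have inversion {t E : ℝ} (ht : 0 < t) (hE : HasDerivWithinAt G (α / t * E) (Ici t) t) :
      μn.real (Icc 0 t) = G t ^ n + n * G t ^ (n - 1) * E :=
    measureReal_Icc_eq_of_kendallTransform_eq_pow hα hμ htransform ht hE
  have hpow (x : ℝ) : x ^ n = x ^ (n - 1) * x := (pow_sub_one_mul (by lia) x).symm
  refine ⟨fun t ht ht1 => ?_, fun t ht => ?_⟩
  · rw [← ofReal_measureReal, inversion ht
      (hasDerivWithinAt_lackOfMemory_of_le_one hG1 hG2 ht ht1), hG1 t ht ht1, hpow]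
    congr 1
    ring
  · rw [← ofReal_measureReal, inversion (one_pos.trans ht)
      (hasDerivWithinAt_lackOfMemory_of_one_le hG_one hG2 ht.le), hpow, hG2 t ht]
    congr 1
    ring
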